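/- arXiv:1509.02715 — 7 statements merged into one kernel-verified Lean document; each statement's English description precedes it below -/
import Mathlib

section
/- Let T > 0 and let h, g, S : [0,T] → ℝ be continuous. Define Φ(θ) = ∫₀^θ (h(t) − S(t))² dt + ∫_θ^T (g(t) − S(t))² dt for θ ∈ [0,T]. If θ̂ ∈ (0,T) is a local minimum point of Φ and h(θ̂) ≠ g(θ̂), then S(θ̂) = (h(θ̂) + g(θ̂))/2. -/
open MeasureTheory Set Topology

theorem hasDerivAt_integral_right_add_integral_left {E : Type*} [NormedAddCommGroup E]
    [NormedSpace ℝ E] [CompleteSpace E] {f g : ℝ → E} {a b θ : ℝ}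
    (hf : IntervalIntegrable f volume a θ) (hg : IntervalIntegrable g volume θ b)
    (hf_meas : StronglyMeasurableAtFilter f (𝓝 θ)) (hg_meas : StronglyMeasurableAtFilter g (𝓝 θ))
    (hf_cont : ContinuousAt f θ) (hg_cont : ContinuousAt g θ) :
    HasDerivAt (fun x ↦ (∫ t in a..x, f t) + ∫ t in x..b, g t) (f θ - g θ) θ := by
  rw [sub_eq_add_neg]
  exact (intervalIntegral.integral_hasDerivAt_right hf hf_meas hf_cont).add
    (intervalIntegral.integral_hasDerivAt_left hg hg_meas hg_cont)

theorem stronglyMeasurableAtFilter_nhds_of_intervalIntegrable {E : Type*} [NormedAddCommGroup E]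
    {f : ℝ → E} {μ : Measure ℝ} {a b x : ℝ} (hf : IntervalIntegrable f μ a b)
    (hx : x ∈ Ioo a b) : StronglyMeasurableAtFilter f (𝓝 x) μ :=
  ⟨Ioc a b, Ioc_mem_nhds hx.1 hx.2, hf.aestronglyMeasurable⟩

theorem eq_of_isLocalExtr_integral_add_integral {f g : ℝ → ℝ} {a b θ : ℝ}
    (hf : IntervalIntegrable f volume a b) (hg : IntervalIntegrable g volume a b)
    (hθ : θ ∈ Ioo a b) (hf_cont : ContinuousAt f θ) (hg_cont : ContinuousAt g θ)
    (hextr : IsLocalExtr (fun x ↦ (∫ t in a..x, f t) + ∫ t in x..b, g t) θ) :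
    f θ = g θ := by
  have hθ_mem : θ ∈ uIcc a b := Icc_subset_uIcc (Ioo_subset_Icc_self hθ)
  have hderiv := hasDerivAt_integral_right_add_integral_left
    (hf.mono_set (uIcc_subset_uIcc_left hθ_mem)) (hg.mono_set (uIcc_subset_uIcc_right hθ_mem))
    (stronglyMeasurableAtFilter_nhds_of_intervalIntegrable hf hθ)
    (stronglyMeasurableAtFilter_nhds_of_intervalIntegrable hg hθ) hf_cont hg_cont
  exact sub_eq_zero.mp (hextr.hasDerivAt_eq_zero hderiv)

theorem eq_add_div_two_of_sq_sub_eq_sq_sub {K : Type*} [Field K] [NeZero (2 : K)] {x y s : K}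
    (hxy : x ≠ y) (hsq : (x - s) ^ 2 = (y - s) ^ 2) : s = (x + y) / 2 := by
  rcases sq_eq_sq_iff_eq_or_eq_neg.mp hsq with heq | hneg
  · exact absurd (sub_left_injective heq) hxy
  · rw [eq_div_iff two_ne_zero]
    linear_combination -hneg

theorem local_min_of_KL_distance_implies_midpoint_general {h g S : ℝ → ℝ} {a b θ : ℝ}
    (hhS : IntervalIntegrable (fun t ↦ (h t - S t) ^ 2) volume a b)
    (hgS : IntervalIntegrable (fun t ↦ (g t - S t) ^ 2) volume a b)
    (hθ : θ ∈ Ioo a b)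
    (hh : ContinuousAt h θ) (hg : ContinuousAt g θ) (hS : ContinuousAt S θ)
    (hextr : IsLocalExtr
      (fun x ↦ (∫ t in a..x, (h t - S t) ^ 2) + ∫ t in x..b, (g t - S t) ^ 2) θ)
    (hne : h θ ≠ g θ) :
    S θ = (h θ + g θ) / 2 :=
  eq_add_div_two_of_sq_sub_eq_sq_sub hne <|
    eq_of_isLocalExtr_integral_add_integral hhS hgS hθ ((hh.sub hS).pow 2) ((hg.sub hS).pow 2)
      hextr

/-- Necessary condition at an interior local minimum of the Kullback–Leibler
distance (the paper's equation (mm)): S(θ̂) = (h(θ̂) + g(θ̂))/2 whenever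
h(θ̂) ≠ g(θ̂). -/
theorem local_min_of_KL_distance_implies_midpoint
    (T : ℝ) (hT : 0 < T) (h g S : ℝ → ℝ)
    (hh : ContinuousOn h (Set.Icc 0 T))
    (hg : ContinuousOn g (Set.Icc 0 T))
    (hS : ContinuousOn S (Set.Icc 0 T))
    (Φ : ℝ → ℝ)
    (hΦ : ∀ θ, Φ θ = (∫ t in (0:ℝ)..θ, (h t - S t) ^ 2) +
      ∫ t in θ..T, (g t - S t) ^ 2)
    (θhat : ℝ) (hθhat : θhat ∈ Set.Ioo (0:ℝ) T)
    (hmin : IsLocalMin Φ θhat)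
    (hne : h θhat ≠ g θhat) :
    S θhat = (h θhat + g θhat) / 2 := by
  have hnhds : Icc 0 T ∈ 𝓝 θhat := Icc_mem_nhds hθhat.1 hθhat.2
  exact local_min_of_KL_distance_implies_midpoint_general
    (((hh.sub hS).pow 2).intervalIntegrable_of_Icc hT.le)
    (((hg.sub hS).pow 2).intervalIntegrable_of_Icc hT.le) hθhat
    (hh.continuousAt hnhds) (hg.continuousAt hnhds) (hS.continuousAt hnhds)
    (funext hΦ ▸ hmin.isExtr) hne
end

section
/- Let 0 ≤ α < β ≤ T and let h, g, S : [0,T] → ℝ be continuous. Define Φ(θ) = ∫₀^θ (h(t) − S(t))² dt + ∫_θ^T (g(t) − S(t))² dt. Suppose h(t) > g(t) for all t ∈ [α,β]. If S(t) < (h(t) + g(t))/2 for all t ∈ [α,β], then Φ is strictly increasing on [α,β] and the minimum of Φ over [α,β] is attained uniquely at α. If instead S(t) > (h(t) + g(t))/2 for all t ∈ [α,β], then Φ is strictly decreasing on [α,β] and its minimum over [α,β] is attained uniquely at β. -/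
/-!
Moving the switching time from `x` up to `y` replaces the loss `(g - S) ^ 2` by `(h - S) ^ 2` on
`[x, y]`, so it changes `Φ` by the integral over `[x, y]` of
`(h - S) ^ 2 - (g - S) ^ 2 = (h - g) * (h + g - 2 * S)`. As `g < h`, the sign of this integrand
only depends on the side of the midpoint `(h + g) / 2` on which `S` lies.
-/

open Set MeasureTheory

section SwitchIntegral

variable {E : Type*} [NormedAddCommGroup E] [NormedSpace ℝ E] {a b : ℝ}

/-- The integral over `[a, b]` of the function that equals `f₁` before the switching time `θ` and
`f₂` after it. For `f₁ = (h - S) ^ 2` and `f₂ = (g - S) ^ 2` this is the Kullback–Leibler distance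
`Φ θ`. It is written with oriented integrals, so it has a value for `θ` outside `[a, b]` too. -/
noncomputable def switchIntegral (f₁ f₂ : ℝ → E) (a b θ : ℝ) : E :=
  (∫ t in a..θ, f₁ t) + ∫ t in θ..b, f₂ t

lemma switchIntegral_neg (f₁ f₂ : ℝ → E) (a b θ : ℝ) :
    switchIntegral (-f₁) (-f₂) a b θ = -switchIntegral f₁ f₂ a b θ := by
  simp only [switchIntegral, Pi.neg_apply, intervalIntegral.integral_neg, neg_add]

lemma switchIntegral_sub_switchIntegral {f₁ f₂ : ℝ → E} {x y : ℝ}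
    (hf₁ : IntervalIntegrable f₁ volume a b)
    (hf₂ : IntervalIntegrable f₂ volume a b)
    (hx : x ∈ uIcc a b) (hy : y ∈ uIcc a b) :
    switchIntegral f₁ f₂ a b y - switchIntegral f₁ f₂ a b x = ∫ t in x..y, f₁ t - f₂ t := by
  have hxy := uIcc_subset_uIcc hx hy
  have split_f₁ := intervalIntegral.integral_add_adjacent_intervals
    (hf₁.mono_set (uIcc_subset_uIcc_left hx)) (hf₁.mono_set hxy)
  have split_f₂ := intervalIntegral.integral_add_adjacent_intervals
    (hf₂.mono_set hxy) (hf₂.mono_set (uIcc_subset_uIcc_right hy))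
  rw [intervalIntegral.integral_sub (hf₁.mono_set hxy) (hf₂.mono_set hxy),
    switchIntegral, switchIntegral, ← split_f₁, ← split_f₂]
  abel

variable {f₁ f₂ : ℝ → ℝ} {α β : ℝ}

lemma strictMonoOn_switchIntegral
    (hf₁ : IntervalIntegrable f₁ volume a b)
    (hf₂ : IntervalIntegrable f₂ volume a b)
    (hαβ : Icc α β ⊆ uIcc a b) (hlt : ∀ t ∈ Ioo α β, f₂ t < f₁ t) :
    StrictMonoOn (switchIntegral f₁ f₂ a b) (Icc α β) := by
  intro x hx y hy hxy
  have hsub : uIcc x y ⊆ uIcc a b := uIcc_subset_uIcc (hαβ hx) (hαβ hy)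
  rw [← sub_pos, switchIntegral_sub_switchIntegral hf₁ hf₂ (hαβ hx) (hαβ hy)]
  refine intervalIntegral.intervalIntegral_pos_of_pos_on
    ((hf₁.mono_set hsub).sub (hf₂.mono_set hsub)) (fun t ht ↦ ?_) hxy
  exact sub_pos.2 (hlt t (Ioo_subset_Ioo hx.1 hy.2 ht))

lemma strictAntiOn_switchIntegral
    (hf₁ : IntervalIntegrable f₁ volume a b)
    (hf₂ : IntervalIntegrable f₂ volume a b)
    (hαβ : Icc α β ⊆ uIcc a b) (hlt : ∀ t ∈ Ioo α β, f₁ t < f₂ t) :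
    StrictAntiOn (switchIntegral f₁ f₂ a b) (Icc α β) := by
  have hneg : StrictMonoOn (switchIntegral (-f₁) (-f₂) a b) (Icc α β) :=
    strictMonoOn_switchIntegral hf₁.neg hf₂.neg hαβ fun t ht ↦ neg_lt_neg (hlt t ht)
  simpa only [switchIntegral_neg, neg_neg] using hneg.neg

end SwitchIntegral

section Midpoint

variable {K : Type*} [Field K]

lemma sq_sub_sub_sq_sub_eq_mul_midpoint [NeZero (2 : K)] (u v s : K) :
    (v - s) ^ 2 - (u - s) ^ 2 = 2 * (v - u) * ((v + u) / 2 - s) := by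
  field

variable [LinearOrder K] [IsStrictOrderedRing K] {u v s : K}

lemma sq_sub_lt_sq_sub_iff_lt_midpoint (huv : u < v) :
    (u - s) ^ 2 < (v - s) ^ 2 ↔ s < (v + u) / 2 := by
  have hpos : 0 < 2 * (v - u) := mul_pos two_pos (sub_pos.2 huv)
  rw [← sub_pos, sq_sub_sub_sq_sub_eq_mul_midpoint, mul_pos_iff_of_pos_left hpos, sub_pos]

lemma sq_sub_lt_sq_sub_iff_midpoint_lt (huv : u < v) :
    (v - s) ^ 2 < (u - s) ^ 2 ↔ (v + u) / 2 < s := by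
  have hpos : 0 < 2 * (v - u) := mul_pos two_pos (sub_pos.2 huv)
  rw [← sub_neg, sq_sub_sub_sq_sub_eq_mul_midpoint, ← smul_eq_mul, smul_neg_iff_of_pos_left hpos,
    sub_neg]

end Midpoint

theorem KL_distance_monotone_when_no_midpoint_crossing_general
    {a b α β : ℝ} (hα : a ≤ α) (hβ : β ≤ b) {h g S : ℝ → ℝ}
    (hhS : IntervalIntegrable (fun t ↦ (h t - S t) ^ 2) volume a b)
    (hgS : IntervalIntegrable (fun t ↦ (g t - S t) ^ 2) volume a b)
    (hhg : ∀ t ∈ Icc α β, g t < h t) {Φ : ℝ → ℝ}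
    (hΦ : ∀ θ, Φ θ = (∫ t in a..θ, (h t - S t) ^ 2) + ∫ t in θ..b, (g t - S t) ^ 2) :
    ((∀ t ∈ Icc α β, S t < (h t + g t) / 2) →
      StrictMonoOn Φ (Icc α β) ∧ ∀ θ ∈ Icc α β, θ ≠ α → Φ α < Φ θ) ∧
    ((∀ t ∈ Icc α β, (h t + g t) / 2 < S t) →
      StrictAntiOn Φ (Icc α β) ∧ ∀ θ ∈ Icc α β, θ ≠ β → Φ β < Φ θ) := by
  obtain rfl : Φ = switchIntegral (fun t ↦ (h t - S t) ^ 2) (fun t ↦ (g t - S t) ^ 2) a b :=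
    funext hΦ
  have hsub : Icc α β ⊆ uIcc a b := (Icc_subset_Icc hα hβ).trans Icc_subset_uIcc
  refine ⟨fun hS ↦ ?_, fun hS ↦ ?_⟩
  · have hmono := strictMonoOn_switchIntegral hhS hgS hsub fun t ht ↦
      have ht' := Ioo_subset_Icc_self ht
      (sq_sub_lt_sq_sub_iff_lt_midpoint (hhg t ht')).2 (hS t ht')
    exact ⟨hmono, fun θ hθ hne ↦
      hmono (left_mem_Icc.2 (hθ.1.trans hθ.2)) hθ (hθ.1.lt_of_ne' hne)⟩
  · have hanti := strictAntiOn_switchIntegral hhS hgS hsub fun t ht ↦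
      have ht' := Ioo_subset_Icc_self ht
      (sq_sub_lt_sq_sub_iff_midpoint_lt (hhg t ht')).2 (hS t ht')
    exact ⟨hanti, fun θ hθ hne ↦
      hanti hθ (right_mem_Icc.2 (hθ.1.trans hθ.2)) (hθ.2.lt_of_ne hne)⟩

/-- If S(t) < (h(t)+g(t))/2 on [α,β] (resp. >), then the Kullback–Leibler
distance Φ is strictly increasing (resp. decreasing) on [α,β], so the
minimizer over [α,β] is the boundary point α (resp. β). -/
theorem KL_distance_monotone_when_no_midpoint_crossing
    (T α β : ℝ) (hα : 0 ≤ α) (hαβ : α < β) (hβT : β ≤ T)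
    (h g S : ℝ → ℝ)
    (hh : ContinuousOn h (Set.Icc 0 T))
    (hg : ContinuousOn g (Set.Icc 0 T))
    (hS : ContinuousOn S (Set.Icc 0 T))
    (hhg : ∀ t ∈ Set.Icc α β, g t < h t)
    (Φ : ℝ → ℝ)
    (hΦ : ∀ θ, Φ θ = (∫ t in (0:ℝ)..θ, (h t - S t) ^ 2) +
      ∫ t in θ..T, (g t - S t) ^ 2) :
    ((∀ t ∈ Set.Icc α β, S t < (h t + g t) / 2) →
      StrictMonoOn Φ (Set.Icc α β) ∧
      ∀ θ ∈ Set.Icc α β, θ ≠ α → Φ α < Φ θ) ∧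
    ((∀ t ∈ Set.Icc α β, (h t + g t) / 2 < S t) →
      StrictAntiOn Φ (Set.Icc α β) ∧
      ∀ θ ∈ Set.Icc α β, θ ≠ β → Φ β < Φ θ) := by
  have hT : 0 ≤ T := hα.trans (hαβ.le.trans hβT)
  exact KL_distance_monotone_when_no_midpoint_crossing_general hα hβT
    (((hh.sub hS).pow 2).intervalIntegrable_of_Icc hT)
    (((hg.sub hS).pow 2).intervalIntegrable_of_Icc hT) hhg hΦ
end

section
/- Let T > 0 and θ₀ ∈ [0,T]. Define Φ(θ) = ∫₀^T (sgn(t − θ) − (t − θ₀))² dt for θ ∈ [0,T], where sgn(x) = 1 for x > 0, sgn(x) = −1 for x < 0, sgn(0) = 0. Then Φ(θ) − Φ(θ₀) = 2 (θ − θ₀)² for all θ ∈ [0,T]; in particular θ₀ is the unique minimizer of Φ on [0,T]. -/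
/-!
Moving the jump of `sgn (t - θ)` from `η` to `θ` replaces the value `1` by `-1` exactly between
`η` and `θ`, so the integrated loss changes by the integral over `η..θ` of the loss at `-1` minus
the loss at `1`. For the squared distance to a signal `S` this difference is
`(-1 - S)² - (1 - S)² = 4 S`; for `S t = t - θ₀` and `η = θ₀` it integrates to `2 (θ - θ₀)²`.
-/

open MeasureTheory Set intervalIntegral

section SignLoss

variable {E : Type*} {F : ℝ → ℝ → E} {a b θ η : ℝ}

theorem eqOn_comp_sign_sub_Iio (F : ℝ → ℝ → E) (θ : ℝ) :
    EqOn (F (-1)) (fun t ↦ F (Real.sign (t - θ)) t) (Iio θ) := fun t ht ↦ by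
  simp only [Real.sign_of_neg (sub_neg.mpr ht)]

theorem eqOn_comp_sign_sub_Ioi (F : ℝ → ℝ → E) (θ : ℝ) :
    EqOn (F 1) (fun t ↦ F (Real.sign (t - θ)) t) (Ioi θ) := fun t ht ↦ by
  simp only [Real.sign_of_pos (sub_pos.mpr ht)]

variable [NormedAddCommGroup E] [NormedSpace ℝ E]

theorem integral_comp_sign_sub (hθ : θ ∈ Icc a b)
    (hneg : IntervalIntegrable (F (-1)) volume a θ)
    (hpos : IntervalIntegrable (F 1) volume θ b) :
    ∫ t in a..b, F (Real.sign (t - θ)) t = (∫ t in a..θ, F (-1) t) + ∫ t in θ..b, F 1 t := by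
  have eqOn_left : EqOn (F (-1)) (fun t ↦ F (Real.sign (t - θ)) t) (Ioo a θ) :=
    (eqOn_comp_sign_sub_Iio F θ).mono Ioo_subset_Iio_self
  have eqOn_right : EqOn (F 1) (fun t ↦ F (Real.sign (t - θ)) t) (Ioo θ b) :=
    (eqOn_comp_sign_sub_Ioi F θ).mono Ioo_subset_Ioi_self
  rw [integral_congr_Ioo_of_le hθ.1 eqOn_left, integral_congr_Ioo_of_le hθ.2 eqOn_right]
  exact (integral_add_adjacent_intervals
    (hneg.congr_uIoo (uIoo_of_le hθ.1 ▸ eqOn_left))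
    (hpos.congr_uIoo (uIoo_of_le hθ.2 ▸ eqOn_right))).symm

theorem integral_comp_sign_sub_sub_integral_comp_sign_sub (hθ : θ ∈ Icc a b) (hη : η ∈ Icc a b)
    (hneg : IntervalIntegrable (F (-1)) volume a b)
    (hpos : IntervalIntegrable (F 1) volume a b) :
    (∫ t in a..b, F (Real.sign (t - θ)) t) - ∫ t in a..b, F (Real.sign (t - η)) t =
      ∫ t in η..θ, (F (-1) t - F 1 t) := by
  have restrict {f : ℝ → E} (hf : IntervalIntegrable f volume a b) {c d : ℝ}
      (hc : c ∈ Icc a b) (hd : d ∈ Icc a b) : IntervalIntegrable f volume c d :=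
    hf.mono_set (uIcc_subset_uIcc (Icc_subset_uIcc hc) (Icc_subset_uIcc hd))
  have ha : a ∈ Icc a b := left_mem_Icc.mpr (hθ.1.trans hθ.2)
  have hb : b ∈ Icc a b := right_mem_Icc.mpr (hθ.1.trans hθ.2)
  rw [integral_comp_sign_sub hθ (restrict hneg ha hθ) (restrict hpos hθ hb),
    integral_comp_sign_sub hη (restrict hneg ha hη) (restrict hpos hη hb),
    integral_sub (restrict hneg hη hθ) (restrict hpos hη hθ),
    ← integral_add_adjacent_intervals (restrict hneg ha hη) (restrict hneg hη hθ),
    ← integral_add_adjacent_intervals (restrict hpos hη hθ) (restrict hpos hθ hb)]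
  abel

end SignLoss

theorem intervalIntegrable_const_sub_sq {S : ℝ → ℝ} {a b : ℝ} (c : ℝ)
    (hS : IntervalIntegrable S volume a b)
    (hS_sq : IntervalIntegrable (fun t ↦ S t ^ 2) volume a b) :
    IntervalIntegrable (fun t ↦ (c - S t) ^ 2) volume a b := by
  simp only [sub_sq]
  exact (intervalIntegrable_const.sub (hS.const_mul (2 * c))).add hS_sq

theorem integral_sign_sub_sub_sq_sub_integral {S : ℝ → ℝ} {a b θ η : ℝ}
    (hθ : θ ∈ Icc a b) (hη : η ∈ Icc a b) (hS : IntervalIntegrable S volume a b)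
    (hS_sq : IntervalIntegrable (fun t ↦ S t ^ 2) volume a b) :
    (∫ t in a..b, (Real.sign (t - θ) - S t) ^ 2) - ∫ t in a..b, (Real.sign (t - η) - S t) ^ 2 =
      4 * ∫ t in η..θ, S t := by
  have loss_diff (t : ℝ) : (-1 - S t) ^ 2 - (1 - S t) ^ 2 = 4 * S t := by ring
  rw [integral_comp_sign_sub_sub_integral_comp_sign_sub (F := fun s t ↦ (s - S t) ^ 2) hθ hη
    (intervalIntegrable_const_sub_sq _ hS hS_sq) (intervalIntegrable_const_sub_sq _ hS hS_sq)]
  simp only [loss_diff, intervalIntegral.integral_const_mul]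

/-- Example 1 identification: for the true smooth signal t − θ₀ and the
theoretical discontinuous signal sgn(t − θ), the Kullback–Leibler distance
satisfies Φ(θ) − Φ(θ₀) = 2(θ − θ₀)², so θ₀ is the unique minimizer. -/
theorem example1_KL_identification
    (T θ₀ : ℝ) (hT : 0 < T) (hθ₀ : θ₀ ∈ Set.Icc (0:ℝ) T)
    (Φ : ℝ → ℝ)
    (hΦ : ∀ θ, Φ θ = ∫ t in (0:ℝ)..T, (Real.sign (t - θ) - (t - θ₀)) ^ 2) :
    (∀ θ ∈ Set.Icc (0:ℝ) T, Φ θ - Φ θ₀ = 2 * (θ - θ₀) ^ 2) ∧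
    (∀ θ ∈ Set.Icc (0:ℝ) T, θ ≠ θ₀ → Φ θ₀ < Φ θ) := by
  have Φ_sub (θ) (hθ : θ ∈ Icc 0 T) : Φ θ - Φ θ₀ = 2 * (θ - θ₀) ^ 2 := calc
    Φ θ - Φ θ₀ = 4 * ∫ t in θ₀..θ, (t - θ₀) := by
      rw [hΦ, hΦ]
      exact integral_sign_sub_sub_sq_sub_integral hθ hθ₀
        (Continuous.intervalIntegrable (by fun_prop) 0 T)
        (Continuous.intervalIntegrable (by fun_prop) 0 T)
    _ = 4 * ((θ - θ₀) ^ 2 / 2) := by simp [integral_comp_sub_right (fun t ↦ t)]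
    _ = 2 * (θ - θ₀) ^ 2 := by ring
  refine ⟨Φ_sub, fun θ hθ hne ↦ sub_pos.mp ?_⟩
  rw [Φ_sub θ hθ]
  exact mul_pos two_pos (sq_pos_of_ne_zero (sub_ne_zero.mpr hne))
end

section
/- Let 0 < α < θ₀ < β < T and let h, g, q, r : [0,T] → ℝ be continuous. Define S(t) = (h(t) + q(t))·1{t < θ₀} + (g(t) + r(t))·1{t ≥ θ₀} and, for θ ∈ [α,β], Φ(θ) = ∫₀^T (M(θ,t) − S(t))² dt where M(θ,t) = h(t)·1{t < θ} + g(t)·1{t ≥ θ}. Then Φ is differentiable on (α,θ₀) and on (θ₀,β), with Φ'(θ) = −(h(θ) − g(θ))(h(θ) − g(θ) + 2q(θ)) for θ ∈ (α,θ₀), and Φ'(θ) = (h(θ) − g(θ))(h(θ) − g(θ) − 2r(θ)) for θ ∈ (θ₀,β). -/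
/-!
At a jump time `θ`, the integral over `a..b` of the function equal to `u` before `θ` and to `v` from
`θ` on is `∫ t in a..θ, u t + ∫ t in θ..b, v t`, whose derivative in `θ` is `u θ - v θ`. The squared
distance of the model `h, g` to a signal `S` is such an integral with `u = (h - S) ^ 2` and
`v = (g - S) ^ 2`. Away from the jump `θ₀` of `S`, the signal is locally `h + q` or `g + r`, which
gives `q ^ 2 - (g - (h + q)) ^ 2` and `(h - (g + r)) ^ 2 - r ^ 2`, respectively.
-/

open MeasureTheory Set Filter Topology

section PiecewiseIntegral

variable {E : Type*} [NormedAddCommGroup E] [NormedSpace ℝ E] {u v : ℝ → E} {a b θ : ℝ}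

theorem intervalIntegral_piecewise_Iio {μ : Measure ℝ} [NullSingletonClass μ] (hθ : θ ∈ Icc a b)
    (hu : IntervalIntegrable u μ a θ) (hv : IntervalIntegrable v μ θ b) :
    ∫ t in a..b, (Iio θ).piecewise u v t ∂μ = (∫ t in a..θ, u t ∂μ) + ∫ t in θ..b, v t ∂μ := by
  have hu_eq : ∀ᵐ t ∂μ, t ∈ uIoc a θ → u t = (Iio θ).piecewise u v t := by
    filter_upwards [Measure.ae_ne μ θ] with t ht_ne ht
    rw [uIoc_of_le hθ.1] at ht
    exact (piecewise_eq_of_mem (Iio θ) _ _ (lt_of_le_of_ne ht.2 ht_ne)).symm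
  have hv_eq : ∀ᵐ t ∂μ, t ∈ uIoc θ b → v t = (Iio θ).piecewise u v t := by
    filter_upwards with t ht
    rw [uIoc_of_le hθ.2] at ht
    exact (piecewise_eq_of_notMem (Iio θ) _ _ (notMem_Iio.2 ht.1.le)).symm
  have hu_int := hu.congr_ae ((ae_restrict_iff' measurableSet_uIoc).2 hu_eq)
  have hv_int := hv.congr_ae ((ae_restrict_iff' measurableSet_uIoc).2 hv_eq)
  rw [intervalIntegral.integral_congr_ae hu_eq, intervalIntegral.integral_congr_ae hv_eq,
    intervalIntegral.integral_add_adjacent_intervals hu_int hv_int]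

theorem hasDerivAt_intervalIntegral_piecewise_Iio [CompleteSpace E] (hθ : θ ∈ Ioo a b)
    (hu : IntegrableOn u (Ioc a b)) (hv : IntegrableOn v (Ioc a b))
    (hu_cont : ContinuousAt u θ) (hv_cont : ContinuousAt v θ) :
    HasDerivAt (fun x ↦ ∫ t in a..b, (Iio x).piecewise u v t) (u θ - v θ) θ := by
  have hu_int {x : ℝ} (hx : x ∈ Ioo a b) : IntervalIntegrable u volume a x :=
    (intervalIntegrable_iff_integrableOn_Ioc_of_le hx.1.le).2
      (hu.mono_set (Ioc_subset_Ioc_right hx.2.le))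
  have hv_int {x : ℝ} (hx : x ∈ Ioo a b) : IntervalIntegrable v volume x b :=
    (intervalIntegrable_iff_integrableOn_Ioc_of_le hx.2.le).2
      (hv.mono_set (Ioc_subset_Ioc_left hx.1.le))
  have hu_deriv : HasDerivAt (fun x ↦ ∫ t in a..x, u t) (u θ) θ :=
    intervalIntegral.integral_hasDerivAt_right (hu_int hθ)
      ⟨Ioc a b, Ioc_mem_nhds hθ.1 hθ.2, hu.aestronglyMeasurable⟩ hu_cont
  have hv_deriv : HasDerivAt (fun x ↦ ∫ t in x..b, v t) (-v θ) θ :=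
    intervalIntegral.integral_hasDerivAt_left (hv_int hθ)
      ⟨Ioc a b, Ioc_mem_nhds hθ.1 hθ.2, hv.aestronglyMeasurable⟩ hv_cont
  rw [sub_eq_add_neg]
  refine (hu_deriv.add hv_deriv).congr_of_eventuallyEq ?_
  filter_upwards [Ioo_mem_nhds hθ.1 hθ.2] with x hx
  exact intervalIntegral_piecewise_Iio (Ioo_subset_Icc_self hx) (hu_int hx) (hv_int hx)

end PiecewiseIntegral

theorem hasDerivAt_intervalIntegral_sq_piecewise_Iio_sub {a b θ : ℝ} {h g S : ℝ → ℝ}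
    (hθ : θ ∈ Ioo a b) (hh : MemLp h 2 (volume.restrict (Ioc a b)))
    (hg : MemLp g 2 (volume.restrict (Ioc a b))) (hS : MemLp S 2 (volume.restrict (Ioc a b)))
    (hh_cont : ContinuousAt h θ) (hg_cont : ContinuousAt g θ) (hS_cont : ContinuousAt S θ) :
    HasDerivAt (fun x ↦ ∫ t in a..b, ((Iio x).piecewise h g t - S t) ^ 2)
      ((h θ - S θ) ^ 2 - (g θ - S θ) ^ 2) θ := by
  have sq_piecewise (x t : ℝ) : ((Iio x).piecewise h g t - S t) ^ 2 =
      (Iio x).piecewise (fun t ↦ (h t - S t) ^ 2) (fun t ↦ (g t - S t) ^ 2) t :=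
    apply_piecewise _ _ _ fun t y ↦ (y - S t) ^ 2
  simp only [sq_piecewise]
  exact hasDerivAt_intervalIntegral_piecewise_Iio hθ (hh.sub hS).integrable_sq
    (hg.sub hS).integrable_sq ((hh_cont.sub hS_cont).pow 2) ((hg_cont.sub hS_cont).pow 2)

theorem memLp_restrict_of_continuousOn_isCompact {X E : Type*} [TopologicalSpace X]
    [T2Space X] [MeasurableSpace X] [OpensMeasurableSpace X]
    [NormedAddCommGroup E] {μ : Measure X} [IsFiniteMeasureOnCompacts μ] {K : Set X} {f : X → E}
    (p : ENNReal) (hK : IsCompact K) (hf : ContinuousOn f K) : MemLp f p (μ.restrict K) := by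
  have : IsFiniteMeasure (μ.restrict K) := ⟨by simpa using hK.measure_lt_top⟩
  obtain ⟨C, hC⟩ := hK.exists_bound_of_continuousOn hf
  exact MemLp.of_bound (hf.aestronglyMeasurable_of_isCompact hK hK.measurableSet) C
    (ae_restrict_of_forall_mem hK.measurableSet hC)

theorem KL_deriv_discontinuous_vs_discontinuous_general {a b θ₀ : ℝ} {h g q r : ℝ → ℝ}
    (hh : MemLp h 2 (volume.restrict (Ioc a b))) (hg : MemLp g 2 (volume.restrict (Ioc a b)))
    (hq : MemLp q 2 (volume.restrict (Ioc a b))) (hr : MemLp r 2 (volume.restrict (Ioc a b)))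
    {S : ℝ → ℝ} (hS : S = (Iio θ₀).piecewise (h + q) (g + r))
    {Φ : ℝ → ℝ} (hΦ : ∀ θ, Φ θ = ∫ t in a..b, ((Iio θ).piecewise h g t - S t) ^ 2)
    {θ : ℝ} (hθ : θ ∈ Ioo a b) (hh_cont : ContinuousAt h θ) (hg_cont : ContinuousAt g θ) :
    (θ < θ₀ → ContinuousAt q θ →
      HasDerivAt Φ (-((h θ - g θ) * (h θ - g θ + 2 * q θ))) θ) ∧
    (θ₀ < θ → ContinuousAt r θ →
      HasDerivAt Φ ((h θ - g θ) * (h θ - g θ - 2 * r θ)) θ) := by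
  obtain rfl : Φ = fun θ ↦ ∫ t in a..b, ((Iio θ).piecewise h g t - S t) ^ 2 := funext hΦ
  have hS_memLp : MemLp S 2 (volume.restrict (Ioc a b)) :=
    hS ▸ MemLp.piecewise measurableSet_Iio ((hh.add hq).restrict _) ((hg.add hr).restrict _)
  have hasDerivAt_of_eventuallyEq {f : ℝ → ℝ} (hSf : S =ᶠ[𝓝 θ] f) (hf : ContinuousAt f θ) :=
    hasDerivAt_intervalIntegral_sq_piecewise_Iio_sub hθ hh hg hS_memLp hh_cont hg_cont
      (hf.congr hSf.symm)
  refine ⟨fun hlt hq_cont ↦ ?_, fun hlt hr_cont ↦ ?_⟩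
  · have hS_eq : S =ᶠ[𝓝 θ] h + q :=
      hS ▸ (piecewise_eqOn _ _ _).eventuallyEq_of_mem (Iio_mem_nhds hlt)
    convert hasDerivAt_of_eventuallyEq hS_eq (hh_cont.add hq_cont) using 1
    rw [hS_eq.eq_of_nhds, Pi.add_apply]
    ring
  · have hS_eq : S =ᶠ[𝓝 θ] g + r :=
      hS ▸ (piecewise_eqOn_compl _ _ _).eventuallyEq_of_mem
        (mem_of_superset (Ioi_mem_nhds hlt) fun _ ht ↦ notMem_Iio.2 (le_of_lt ht))
    convert hasDerivAt_of_eventuallyEq hS_eq (hg_cont.add hr_cont) using 1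
    rw [hS_eq.eq_of_nhds, Pi.add_apply]
    ring

/-- Section 3.3 (discontinuous versus discontinuous): derivative of the
Kullback–Leibler distance between the theoretical change-point signal
M(θ,t) = h(t)·1{t<θ} + g(t)·1{t≥θ} and the perturbed true signal
S(t) = (h+q)(t)·1{t<θ₀} + (g+r)(t)·1{t≥θ₀}, on both sides of θ₀. -/
theorem KL_deriv_discontinuous_vs_discontinuous
    (T α β θ₀ : ℝ) (hα : 0 < α) (hαθ : α < θ₀) (hθβ : θ₀ < β) (hβT : β < T)
    (h g q r : ℝ → ℝ)
    (hh : ContinuousOn h (Set.Icc 0 T))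
    (hg : ContinuousOn g (Set.Icc 0 T))
    (hq : ContinuousOn q (Set.Icc 0 T))
    (hr : ContinuousOn r (Set.Icc 0 T))
    (S : ℝ → ℝ)
    (hS : ∀ t, S t = if t < θ₀ then h t + q t else g t + r t)
    (M : ℝ → ℝ → ℝ)
    (hM : ∀ θ t, M θ t = if t < θ then h t else g t)
    (Φ : ℝ → ℝ)
    (hΦ : ∀ θ, Φ θ = ∫ t in (0:ℝ)..T, (M θ t - S t) ^ 2) :
    (∀ θ ∈ Set.Ioo α θ₀,
      HasDerivAt Φ (-((h θ - g θ) * (h θ - g θ + 2 * q θ))) θ) ∧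
    (∀ θ ∈ Set.Ioo θ₀ β,
      HasDerivAt Φ ((h θ - g θ) * (h θ - g θ - 2 * r θ)) θ) := by
  have memLp {f : ℝ → ℝ} (hf : ContinuousOn f (Icc 0 T)) : MemLp f 2 (volume.restrict (Ioc 0 T)) :=
    (memLp_restrict_of_continuousOn_isCompact 2 isCompact_Icc hf).mono_measure
      (Measure.restrict_mono_set _ Ioc_subset_Icc_self)
  have continuousAt {f : ℝ → ℝ} {θ : ℝ} (hf : ContinuousOn f (Icc 0 T)) (hθ : θ ∈ Ioo 0 T) :
      ContinuousAt f θ := hf.continuousAt (Icc_mem_nhds hθ.1 hθ.2)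
  have hΦ_piecewise (θ : ℝ) : Φ θ = ∫ t in 0..T, ((Iio θ).piecewise h g t - S t) ^ 2 := by
    simp only [hΦ, hM, Set.piecewise, mem_Iio]
  have hasDerivAt {θ : ℝ} (hθ : θ ∈ Ioo 0 T) :=
    KL_deriv_discontinuous_vs_discontinuous_general (memLp hh) (memLp hg) (memLp hq) (memLp hr)
      (funext hS) hΦ_piecewise hθ (continuousAt hh hθ) (continuousAt hg hθ)
  refine ⟨fun θ hθ ↦ ?_, fun θ hθ ↦ ?_⟩
  · have hθT : θ ∈ Ioo 0 T := ⟨hα.trans hθ.1, hθ.2.trans (hθβ.trans hβT)⟩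
    exact (hasDerivAt hθT).1 hθ.2 (continuousAt hq hθT)
  · have hθT : θ ∈ Ioo 0 T := ⟨(hα.trans hαθ).trans hθ.1, hθ.2.trans hβT⟩
    exact (hasDerivAt hθT).2 hθ.1 (continuousAt hr hθT)
end

section
/- Let 0 < α < θ₀ < β < T and let h, g, q, r : [0,T] → ℝ be continuous. Define S(t) = (h(t) + q(t))·1{t < θ₀} + (g(t) + r(t))·1{t ≥ θ₀} and, for θ ∈ [α,β], Φ(θ) = ∫₀^T (M(θ,t) − S(t))² dt where M(θ,t) = h(t)·1{t < θ} + g(t)·1{t ≥ θ}. Assume that for all t ∈ [α,β]: h(t) − g(t) > 0, q(t) > (g(t) − h(t))/2, and r(t) < (h(t) − g(t))/2. Then Φ is strictly decreasing on [α,θ₀], strictly increasing on [θ₀,β], and θ₀ is the unique minimizer of Φ on [α,β]. -/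
/-!
Since `M θ` equals `h` before `θ` and `g` after it, `Φ θ` integrates `(h - S) ^ 2` up to `θ` and
`(g - S) ^ 2` from `θ` on, whence `Φ θ₂ - Φ θ₁ = ∫ t in θ₁..θ₂, ((h - S) ^ 2 - (g - S) ^ 2)`.
So `Φ` decreases where the true signal `S` is closer to `h` than to `g`, and increases where it is
closer to `g`. The conditions on `q` and `r` say that `S` lies above the midpoint of `g < h` before
`θ₀` and below it after `θ₀`.
-/

open MeasureTheory Set

theorem lt_of_strictAntiOn_Icc_of_strictMonoOn_Icc {ι κ : Type*} [LinearOrder ι] [Preorder κ]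
    {φ : ι → κ} {x y z w : ι} (hanti : StrictAntiOn φ (Icc x y))
    (hmono : StrictMonoOn φ (Icc y z)) (hy : y ∈ Icc x z) (hw : w ∈ Icc x z) (hwy : w ≠ y) :
    φ y < φ w := by
  rcases lt_or_gt_of_ne hwy with hlt | hgt
  · exact hanti ⟨hw.1, hlt.le⟩ (right_mem_Icc.2 hy.1) hlt
  · exact hmono (left_mem_Icc.2 hy.2) ⟨hgt.le, hw.2⟩ hgt

section Midpoint

variable {K : Type*} [Field K] [LinearOrder K] [IsStrictOrderedRing K] {x y s : K}

theorem abs_right_sub_lt_abs_left_sub_iff (hxy : x < y) : |y - s| < |x - s| ↔ (x + y) / 2 < s := by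
  have sq_diff : (x - s) ^ 2 - (y - s) ^ 2 = 2 * (y - x) * (s - (x + y) / 2) := by ring
  rw [← sq_lt_sq, ← sub_pos, sq_diff, mul_pos_iff_of_pos_left (by linarith), sub_pos]

theorem abs_left_sub_lt_abs_right_sub_iff (hxy : x < y) : |x - s| < |y - s| ↔ s < (x + y) / 2 := by
  have sq_diff : (y - s) ^ 2 - (x - s) ^ 2 = 2 * (y - x) * ((x + y) / 2 - s) := by ring
  rw [← sq_lt_sq, ← sub_pos, sq_diff, mul_pos_iff_of_pos_left (by linarith), sub_pos]

end Midpoint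

section Switch

variable {E : Type*} [NormedAddCommGroup E] {μ : Measure ℝ} {f g : ℝ → E} {a b θ θ₁ θ₂ : ℝ}

theorem intervalIntegrable_ite_lt (hf : IntervalIntegrable f μ a b)
    (hg : IntervalIntegrable g μ a b) (θ : ℝ) :
    IntervalIntegrable (fun t ↦ if t < θ then f t else g t) μ a b :=
  ⟨Integrable.piecewise (s := Iio θ) measurableSet_Iio hf.1.integrableOn hg.1.integrableOn,
    Integrable.piecewise (s := Iio θ) measurableSet_Iio hf.2.integrableOn hg.2.integrableOn⟩

variable [NormedSpace ℝ E] [NullSingletonClass μ]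

theorem integral_ite_lt (hf : IntervalIntegrable f μ a b) (hg : IntervalIntegrable g μ a b)
    (hθ : θ ∈ Icc a b) :
    ∫ t in a..b, (if t < θ then f t else g t) ∂μ =
      (∫ t in a..θ, f t ∂μ) + ∫ t in θ..b, g t ∂μ := by
  have hite := intervalIntegrable_ite_lt hf hg θ
  have hθ' : θ ∈ uIcc a b := Icc_subset_uIcc hθ
  rw [← intervalIntegral.integral_add_adjacent_intervals
    (hite.mono_set (uIcc_subset_uIcc_left hθ')) (hite.mono_set (uIcc_subset_uIcc_right hθ'))]
  congr 1
  · exact intervalIntegral.integral_congr_Ioo_of_le hθ.1 fun t ht ↦ if_pos ht.2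
  · exact intervalIntegral.integral_congr_Ioo_of_le hθ.2 fun t ht ↦ if_neg ht.1.not_gt

theorem integral_ite_lt_sub_integral_ite_lt (hf : IntervalIntegrable f μ a b)
    (hg : IntervalIntegrable g μ a b) (hθ₁ : θ₁ ∈ Icc a b) (hθ₂ : θ₂ ∈ Icc a b) :
    (∫ t in a..b, (if t < θ₂ then f t else g t) ∂μ) -
        ∫ t in a..b, (if t < θ₁ then f t else g t) ∂μ =
      ∫ t in θ₁..θ₂, (f t - g t) ∂μ := by
  have hθ₁' : θ₁ ∈ uIcc a b := Icc_subset_uIcc hθ₁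
  have hθ₂' : θ₂ ∈ uIcc a b := Icc_subset_uIcc hθ₂
  have hsub : uIcc θ₁ θ₂ ⊆ uIcc a b := uIcc_subset_uIcc hθ₁' hθ₂'
  have hf_split := intervalIntegral.integral_add_adjacent_intervals
    (hf.mono_set (uIcc_subset_uIcc_left hθ₁')) (hf.mono_set hsub)
  have hg_split := intervalIntegral.integral_add_adjacent_intervals
    (hg.mono_set hsub) (hg.mono_set (uIcc_subset_uIcc_right hθ₂'))
  rw [integral_ite_lt hf hg hθ₁, integral_ite_lt hf hg hθ₂, ← hf_split, ← hg_split,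
    intervalIntegral.integral_sub (hf.mono_set hsub) (hg.mono_set hsub)]
  abel

end Switch

section SwitchMonotone

variable {f g : ℝ → ℝ} {a b α β : ℝ}

theorem strictMonoOn_integral_ite_lt (hf : IntervalIntegrable f volume a b)
    (hg : IntervalIntegrable g volume a b) (hα : a ≤ α) (hβ : β ≤ b)
    (hgf : ∀ t ∈ Ioo α β, g t < f t) :
    StrictMonoOn (fun θ ↦ ∫ t in a..b, if t < θ then f t else g t) (Icc α β) := by
  intro θ₁ hθ₁ θ₂ hθ₂ hlt
  have hθ₁' : θ₁ ∈ Icc a b := Icc_subset_Icc hα hβ hθ₁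
  have hθ₂' : θ₂ ∈ Icc a b := Icc_subset_Icc hα hβ hθ₂
  refine sub_pos.1 ?_
  rw [integral_ite_lt_sub_integral_ite_lt hf hg hθ₁' hθ₂']
  refine intervalIntegral.intervalIntegral_pos_of_pos_on ?_ ?_ hlt
  · exact (hf.sub hg).mono_set (uIcc_subset_uIcc (Icc_subset_uIcc hθ₁') (Icc_subset_uIcc hθ₂'))
  · exact fun t ht ↦ sub_pos.2 (hgf t (Ioo_subset_Ioo hθ₁.1 hθ₂.2 ht))

theorem strictAntiOn_integral_ite_lt (hf : IntervalIntegrable f volume a b)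
    (hg : IntervalIntegrable g volume a b) (hα : a ≤ α) (hβ : β ≤ b)
    (hfg : ∀ t ∈ Ioo α β, f t < g t) :
    StrictAntiOn (fun θ ↦ ∫ t in a..b, if t < θ then f t else g t) (Icc α β) := by
  have hneg := strictMonoOn_integral_ite_lt hf.neg hg.neg hα hβ fun t ht ↦ neg_lt_neg (hfg t ht)
  simpa only [Pi.neg_apply, ← neg_ite, intervalIntegral.integral_neg, neg_neg] using hneg.neg

end SwitchMonotone

theorem intervalIntegrable_sq_sub_ite_lt {μ : Measure ℝ} [IsLocallyFiniteMeasure μ]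
    {u v w : ℝ → ℝ} {a b : ℝ} (hu : ContinuousOn u (uIcc a b))
    (hv : ContinuousOn v (uIcc a b)) (hw : ContinuousOn w (uIcc a b)) (θ : ℝ) :
    IntervalIntegrable (fun t ↦ (u t - if t < θ then v t else w t) ^ 2) μ a b := by
  have hite := intervalIntegrable_ite_lt (μ := μ) ((hu.sub hv).pow 2).intervalIntegrable
    ((hu.sub hw).pow 2).intervalIntegrable θ
  refine hite.congr fun t _ ↦ ?_
  split_ifs <;> rfl

theorem KL_unique_minimizer_discontinuous_vs_discontinuous_general {a b α β θ₀ : ℝ}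
    (haα : a ≤ α) (hαθ : α ≤ θ₀) (hθβ : θ₀ ≤ β) (hβb : β ≤ b) {h g S Φ : ℝ → ℝ}
    (hint_h : IntervalIntegrable (fun t ↦ (h t - S t) ^ 2) volume a b)
    (hint_g : IntervalIntegrable (fun t ↦ (g t - S t) ^ 2) volume a b)
    (hbefore : ∀ t ∈ Ioo α θ₀, |h t - S t| < |g t - S t|)
    (hafter : ∀ t ∈ Ioo θ₀ β, |g t - S t| < |h t - S t|)
    (hΦ : ∀ θ, Φ θ = ∫ t in a..b, ((if t < θ then h t else g t) - S t) ^ 2) :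
    StrictAntiOn Φ (Icc α θ₀) ∧
    StrictMonoOn Φ (Icc θ₀ β) ∧
    (∀ θ ∈ Icc α β, θ ≠ θ₀ → Φ θ₀ < Φ θ) := by
  have hΦ_ite : Φ = fun θ ↦ ∫ t in a..b, if t < θ then (h t - S t) ^ 2 else (g t - S t) ^ 2 := by
    simp only [funext hΦ, ite_sub, ite_pow]
  have hanti : StrictAntiOn Φ (Icc α θ₀) := hΦ_ite ▸
    strictAntiOn_integral_ite_lt hint_h hint_g haα (hθβ.trans hβb)
      fun t ht ↦ sq_lt_sq.2 (hbefore t ht)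
  have hmono : StrictMonoOn Φ (Icc θ₀ β) := hΦ_ite ▸
    strictMonoOn_integral_ite_lt hint_h hint_g (haα.trans hαθ) hβb
      fun t ht ↦ sq_lt_sq.2 (hafter t ht)
  exact ⟨hanti, hmono, fun θ hθ hne ↦
    lt_of_strictAntiOn_Icc_of_strictMonoOn_Icc hanti hmono ⟨hαθ, hθβ⟩ hθ hne⟩

/-- Section 3.3 Proposition (identification): under h − g > 0,
q > (g − h)/2 and r < (h − g)/2 on [α,β], the Kullback–Leibler distance Φ
is strictly decreasing on [α,θ₀], strictly increasing on [θ₀,β], and θ₀ is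
its unique minimizer on [α,β]. -/
theorem KL_unique_minimizer_discontinuous_vs_discontinuous
    (T α β θ₀ : ℝ) (hα : 0 < α) (hαθ : α < θ₀) (hθβ : θ₀ < β) (hβT : β < T)
    (h g q r : ℝ → ℝ)
    (hh : ContinuousOn h (Set.Icc 0 T))
    (hg : ContinuousOn g (Set.Icc 0 T))
    (hq : ContinuousOn q (Set.Icc 0 T))
    (hr : ContinuousOn r (Set.Icc 0 T))
    (hpos : ∀ t ∈ Set.Icc α β, 0 < h t - g t)
    (hqc : ∀ t ∈ Set.Icc α β, (g t - h t) / 2 < q t)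
    (hrc : ∀ t ∈ Set.Icc α β, r t < (h t - g t) / 2)
    (S : ℝ → ℝ)
    (hS : ∀ t, S t = if t < θ₀ then h t + q t else g t + r t)
    (M : ℝ → ℝ → ℝ)
    (hM : ∀ θ t, M θ t = if t < θ then h t else g t)
    (Φ : ℝ → ℝ)
    (hΦ : ∀ θ, Φ θ = ∫ t in (0:ℝ)..T, (M θ t - S t) ^ 2) :
    StrictAntiOn Φ (Set.Icc α θ₀) ∧
    StrictMonoOn Φ (Set.Icc θ₀ β) ∧
    (∀ θ ∈ Set.Icc α β, θ ≠ θ₀ → Φ θ₀ < Φ θ) := by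
  rw [← uIcc_of_le (by linarith : (0 : ℝ) ≤ T)] at hh hg hq hr
  obtain rfl : S = fun t ↦ if t < θ₀ then h t + q t else g t + r t := funext hS
  simp only [hM] at hΦ
  refine KL_unique_minimizer_discontinuous_vs_discontinuous_general hα.le hαθ.le hθβ.le hβT.le
    (intervalIntegrable_sq_sub_ite_lt hh (hh.fun_add hq) (hg.fun_add hr) θ₀)
    (intervalIntegrable_sq_sub_ite_lt hg (hh.fun_add hq) (hg.fun_add hr) θ₀)
    (fun t ht ↦ ?_) (fun t ht ↦ ?_) hΦ
  · have ht' : t ∈ Icc α β := ⟨ht.1.le, (ht.2.trans hθβ).le⟩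
    rw [if_pos ht.2, abs_right_sub_lt_abs_left_sub_iff (sub_pos.1 (hpos t ht'))]
    linarith [hqc t ht']
  · have ht' : t ∈ Icc α β := ⟨(hαθ.trans ht.1).le, ht.2.le⟩
    rw [if_neg ht.1.not_gt, abs_left_sub_lt_abs_right_sub_iff (sub_pos.1 (hpos t ht'))]
    linarith [hrc t ht']
end

section
/- Let T > 0, κ > 1/2, and θ₀ ∈ [0,T]. Define Φ(θ) = ∫₀^T ( sgn(t − θ) − sgn(t − θ₀) |t − θ₀|^κ )² dt for θ ∈ [0,T], where sgn(x) = 1 for x > 0, sgn(x) = −1 for x < 0, sgn(0) = 0. Then Φ(θ) − Φ(θ₀) = 4 |θ − θ₀|^{1+κ} / (1 + κ) for all θ ∈ [0,T]; in particular θ₀ is the unique minimizer of Φ on [0,T]. -/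
/-!
Almost everywhere `(sgn (t - θ) - S t)² = 1 - 2 sgn (t - θ) S t + S t²`, so only the cross term of
the contrast depends on `θ`. Moving the jump from `θ₀` to `θ` flips the sign of the cross term
exactly between the two points, whence `Φ θ - Φ θ₀ = 4 ∫ S` over the oriented interval from `θ₀`
to `θ`, for every square-integrable signal `S`. For `S t = sgn (t - θ₀) |t - θ₀| ^ κ` that
integral is `|θ - θ₀| ^ (1 + κ) / (1 + κ)`; square-integrability amounts to `-1/2 < κ`.
-/

open MeasureTheory Set

section SignContrast

variable {S : ℝ → ℝ} {a b θ θ₀ : ℝ}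

lemma eqOn_sign_sub_mul_uIoo_left (h : a ≤ θ) :
    EqOn (fun t ↦ Real.sign (t - θ) * S t) (fun t ↦ -S t) (uIoo a θ) := by
  intro t ht
  rw [uIoo_of_le h] at ht
  simp only [Real.sign_of_neg (sub_neg.2 ht.2), neg_one_mul]

lemma eqOn_sign_sub_mul_uIoo_right (h : θ ≤ b) :
    EqOn (fun t ↦ Real.sign (t - θ) * S t) S (uIoo θ b) := by
  intro t ht
  rw [uIoo_of_le h] at ht
  simp only [Real.sign_of_pos (sub_pos.2 ht.1), one_mul]

lemma intervalIntegrable_sign_sub_mul_left (hS : IntervalIntegrable S volume a θ) (h : a ≤ θ) :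
    IntervalIntegrable (fun t ↦ Real.sign (t - θ) * S t) volume a θ :=
  hS.neg.congr_uIoo (eqOn_sign_sub_mul_uIoo_left h).symm

lemma intervalIntegrable_sign_sub_mul_right (hS : IntervalIntegrable S volume θ b) (h : θ ≤ b) :
    IntervalIntegrable (fun t ↦ Real.sign (t - θ) * S t) volume θ b :=
  hS.congr_uIoo (eqOn_sign_sub_mul_uIoo_right h).symm

lemma intervalIntegrable_sign_sub_mul (hS : IntervalIntegrable S volume a b)
    (hθ : θ ∈ Icc a b) :
    IntervalIntegrable (fun t ↦ Real.sign (t - θ) * S t) volume a b := by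
  obtain ⟨hleft, hright⟩ := (IntervalIntegrable.trans_iff (Icc_subset_uIcc hθ)).1 hS
  exact (intervalIntegrable_sign_sub_mul_left hleft hθ.1).trans
    (intervalIntegrable_sign_sub_mul_right hright hθ.2)

lemma integral_sign_sub_mul (hS : IntervalIntegrable S volume a b) (hθ : θ ∈ Icc a b) :
    ∫ t in a..b, Real.sign (t - θ) * S t = (∫ t in θ..b, S t) - ∫ t in a..θ, S t := by
  obtain ⟨hleft, hright⟩ := (IntervalIntegrable.trans_iff (Icc_subset_uIcc hθ)).1 hS
  rw [← intervalIntegral.integral_add_adjacent_intervals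
      (intervalIntegrable_sign_sub_mul_left hleft hθ.1)
      (intervalIntegrable_sign_sub_mul_right hright hθ.2),
    intervalIntegral.integral_congr_uIoo (eqOn_sign_sub_mul_uIoo_left hθ.1),
    intervalIntegral.integral_congr_uIoo (eqOn_sign_sub_mul_uIoo_right hθ.2),
    intervalIntegral.integral_neg, neg_add_eq_sub]

lemma sign_sq_of_ne_zero {x : ℝ} (hx : x ≠ 0) : Real.sign x ^ 2 = 1 := by
  rcases Real.sign_apply_eq_of_ne_zero x hx with h | h <;> norm_num [h]

lemma integral_sign_sub_sub_sq (hS : IntervalIntegrable S volume a b)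
    (hS2 : IntervalIntegrable (fun t ↦ S t ^ 2) volume a b) (hθ : θ ∈ Icc a b) :
    ∫ t in a..b, (Real.sign (t - θ) - S t) ^ 2 =
      (b - a) - 2 * (∫ t in a..b, Real.sign (t - θ) * S t) + ∫ t in a..b, S t ^ 2 := by
  have expand : ∀ᵐ t, t ∈ uIoc a b → (Real.sign (t - θ) - S t) ^ 2 =
      1 - 2 * (Real.sign (t - θ) * S t) + S t ^ 2 := by
    filter_upwards [Measure.ae_ne volume θ] with t ht _
    linear_combination sign_sq_of_ne_zero (sub_ne_zero.2 ht)
  have hcross := (intervalIntegrable_sign_sub_mul hS hθ).const_mul 2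
  rw [intervalIntegral.integral_congr_ae expand,
    intervalIntegral.integral_add (intervalIntegrable_const.sub hcross) hS2,
    intervalIntegral.integral_sub intervalIntegrable_const hcross,
    intervalIntegral.integral_const_mul, intervalIntegral.integral_const, smul_eq_mul, mul_one]

lemma integral_sign_sub_sub_sq_sub (hS : IntervalIntegrable S volume a b)
    (hS2 : IntervalIntegrable (fun t ↦ S t ^ 2) volume a b)
    (hθ₀ : θ₀ ∈ Icc a b) (hθ : θ ∈ Icc a b) :
    (∫ t in a..b, (Real.sign (t - θ) - S t) ^ 2) -
      ∫ t in a..b, (Real.sign (t - θ₀) - S t) ^ 2 = 4 * ∫ t in θ₀..θ, S t := by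
  obtain ⟨hleft₀, _⟩ := (IntervalIntegrable.trans_iff (Icc_subset_uIcc hθ₀)).1 hS
  obtain ⟨hleft, hright⟩ := (IntervalIntegrable.trans_iff (Icc_subset_uIcc hθ)).1 hS
  have hmid : IntervalIntegrable S volume θ₀ θ := hleft₀.symm.trans hleft
  have split_left := intervalIntegral.integral_add_adjacent_intervals hleft₀ hmid
  have split_right := intervalIntegral.integral_add_adjacent_intervals hmid hright
  rw [integral_sign_sub_sub_sq hS hS2 hθ, integral_sign_sub_sub_sq hS hS2 hθ₀,
    integral_sign_sub_mul hS hθ, integral_sign_sub_mul hS hθ₀]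
  linear_combination -2 * split_right - 2 * split_left

end SignContrast

/-- The odd extension `sgn x * |x| ^ κ` of the power function, the shape of the true signal at its
singularity. It vanishes at `0` for every `κ`, also for `κ ≤ 0`. -/
noncomputable def signedRpow (κ x : ℝ) : ℝ := Real.sign x * |x| ^ κ

section SignedRpow

variable {κ : ℝ}

lemma signedRpow_neg (κ x : ℝ) : signedRpow κ (-x) = -signedRpow κ x := by
  rw [signedRpow, signedRpow, Real.sign_neg, abs_neg, neg_mul]

lemma signedRpow_of_pos {x : ℝ} (κ : ℝ) (hx : 0 < x) : signedRpow κ x = x ^ κ := by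
  rw [signedRpow, Real.sign_of_pos hx, abs_of_pos hx, one_mul]

lemma eqOn_signedRpow_uIoo_zero {x : ℝ} (κ : ℝ) (hx : 0 ≤ x) :
    EqOn (signedRpow κ) (fun t ↦ t ^ κ) (uIoo 0 x) := by
  intro t ht
  rw [uIoo_of_le hx] at ht
  exact signedRpow_of_pos κ ht.1

lemma intervalIntegrable_signedRpow (hκ : -1 < κ) (a b : ℝ) :
    IntervalIntegrable (signedRpow κ) volume a b :=
  intervalIntegrable_of_odd (fun x ↦ (signedRpow_neg κ x).symm) fun _ hx ↦
    (intervalIntegral.intervalIntegrable_rpow' hκ).congr_uIoo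
      (eqOn_signedRpow_uIoo_zero κ hx.le).symm

lemma intervalIntegrable_signedRpow_sq (hκ : -1 / 2 < κ) (a b : ℝ) :
    IntervalIntegrable (fun t ↦ signedRpow κ t ^ 2) volume a b := by
  refine intervalIntegrable_of_even (fun x ↦ by rw [signedRpow_neg, neg_sq]) fun x hx ↦ ?_
  have hpow : IntervalIntegrable (fun t : ℝ ↦ t ^ (κ * 2)) volume 0 x :=
    intervalIntegral.intervalIntegrable_rpow' (by linarith)
  refine hpow.congr_uIoo fun t ht ↦ ?_
  rw [uIoo_of_le hx.le] at ht
  simp only [signedRpow_of_pos κ ht.1, Real.rpow_mul ht.1.le, Real.rpow_two]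

lemma integral_signedRpow_of_nonneg (hκ : -1 < κ) {x : ℝ} (hx : 0 ≤ x) :
    ∫ t in 0..x, signedRpow κ t = x ^ (1 + κ) / (1 + κ) := by
  rw [intervalIntegral.integral_congr_uIoo (eqOn_signedRpow_uIoo_zero κ hx),
    integral_rpow (Or.inl hκ), add_comm κ 1, Real.zero_rpow (by linarith), sub_zero]

lemma integral_signedRpow_neg (κ x : ℝ) :
    ∫ t in 0..-x, signedRpow κ t = ∫ t in 0..x, signedRpow κ t := by
  have hsubst := intervalIntegral.integral_comp_neg (a := 0) (b := x) (signedRpow κ)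
  simp only [signedRpow_neg, intervalIntegral.integral_neg, neg_zero] at hsubst
  rw [intervalIntegral.integral_symm, ← hsubst, neg_neg]

lemma integral_signedRpow (hκ : -1 < κ) (x : ℝ) :
    ∫ t in 0..x, signedRpow κ t = |x| ^ (1 + κ) / (1 + κ) := by
  rw [← integral_signedRpow_of_nonneg hκ (abs_nonneg x)]
  rcases abs_choice x with h | h
  · rw [h]
  · rw [h, integral_signedRpow_neg]

end SignedRpow

theorem remark1_KL_identification_general {a b κ θ₀ : ℝ} (hκ : -1 / 2 < κ)
    (hθ₀ : θ₀ ∈ Icc a b) {Φ : ℝ → ℝ}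
    (hΦ : ∀ θ, Φ θ = ∫ t in a..b,
      (Real.sign (t - θ) - Real.sign (t - θ₀) * |t - θ₀| ^ κ) ^ 2) :
    (∀ θ ∈ Icc a b, Φ θ - Φ θ₀ = 4 * |θ - θ₀| ^ (1 + κ) / (1 + κ)) ∧
    (∀ θ ∈ Icc a b, θ ≠ θ₀ → Φ θ₀ < Φ θ) := by
  have hκ' : -1 < κ := by linarith
  have hS : IntervalIntegrable (fun t ↦ signedRpow κ (t - θ₀)) volume a b := by
    simpa only [sub_add_cancel] using
      (intervalIntegrable_signedRpow hκ' (a - θ₀) (b - θ₀)).comp_sub_right θ₀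
  have hS2 : IntervalIntegrable (fun t ↦ signedRpow κ (t - θ₀) ^ 2) volume a b := by
    simpa only [sub_add_cancel] using
      (intervalIntegrable_signedRpow_sq hκ (a - θ₀) (b - θ₀)).comp_sub_right θ₀
  have excess : ∀ θ ∈ Icc a b, Φ θ - Φ θ₀ = 4 * |θ - θ₀| ^ (1 + κ) / (1 + κ) := by
    intro θ hθ
    calc Φ θ - Φ θ₀ = 4 * ∫ t in θ₀..θ, signedRpow κ (t - θ₀) := by
          rw [hΦ, hΦ]
          exact integral_sign_sub_sub_sq_sub hS hS2 hθ₀ hθ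
      _ = 4 * |θ - θ₀| ^ (1 + κ) / (1 + κ) := by
          rw [intervalIntegral.integral_comp_sub_right, sub_self, integral_signedRpow hκ',
            mul_div_assoc]
  refine ⟨excess, fun θ hθ hne ↦ sub_pos.1 ?_⟩
  have hdist : 0 < |θ - θ₀| := abs_pos.2 (sub_ne_zero.2 hne)
  have hexp : 0 < 1 + κ := by linarith
  rw [excess θ hθ]
  exact div_pos (mul_pos four_pos (Real.rpow_pos_of_pos hdist _)) hexp

/-- Remark 1 identification: for the true smooth signal
sgn(t − θ₀)|t − θ₀|^κ (κ > 1/2) and the theoretical discontinuous signal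
sgn(t − θ), the Kullback–Leibler distance satisfies
Φ(θ) − Φ(θ₀) = 4|θ − θ₀|^{1+κ}/(1+κ), so θ₀ is its unique minimizer. -/
theorem remark1_KL_identification
    (T κ θ₀ : ℝ) (hT : 0 < T) (hκ : 1 / 2 < κ) (hθ₀ : θ₀ ∈ Set.Icc (0:ℝ) T)
    (Φ : ℝ → ℝ)
    (hΦ : ∀ θ, Φ θ = ∫ t in (0:ℝ)..T,
      (Real.sign (t - θ) - Real.sign (t - θ₀) * |t - θ₀| ^ κ) ^ 2) :
    (∀ θ ∈ Set.Icc (0:ℝ) T,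
      Φ θ - Φ θ₀ = 4 * |θ - θ₀| ^ (1 + κ) / (1 + κ)) ∧
    (∀ θ ∈ Set.Icc (0:ℝ) T, θ ≠ θ₀ → Φ θ₀ < Φ θ) :=
  remark1_KL_identification_general (by linarith) hθ₀ hΦ
end

section
/- Let 0 < α < θ₀ < β < T, let w : [0,T] → ℝ be continuous, let ε > 0, and define X : [0,T] → ℝ by X(t) = t²/2 − θ₀ t + ε w(t). If θ̂ ∈ [α,β] is a minimizer of X over [α,β] (equivalently, a maximizer over [α,β] of the pathwise pseudo log-likelihood θ ↦ X(T) − 2 X(θ)), then (θ̂ − θ₀)² ≤ 4 ε · sup_{t ∈ [α,β]} |w(t)|. -/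
section Oscillation

variable {ι : Type*} {s : Set ι} {x y : ι}

lemma sub_le_two_mul_sSup_image_abs {w : ι → ℝ} (hw : BddAbove ((fun t => |w t|) '' s))
    (hx : x ∈ s) (hy : y ∈ s) : w x - w y ≤ 2 * sSup ((fun t => |w t|) '' s) := by
  have abs_le_sup {t : ι} (ht : t ∈ s) : |w t| ≤ sSup ((fun t => |w t|) '' s) :=
    le_csSup hw (Set.mem_image_of_mem _ ht)
  calc
    w x - w y ≤ |w x - w y| := le_abs_self _
    _ ≤ |w x| + |w y| := abs_sub _ _
    _ ≤ 2 * sSup ((fun t => |w t|) '' s) := by linarith [abs_le_sup hx, abs_le_sup hy]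

lemma sub_le_two_mul_mul_sSup_of_isMinOn_add_mul {f w : ι → ℝ} {ε : ℝ} (hε : 0 ≤ ε)
    (hw : BddAbove ((fun t => |w t|) '' s)) (hmin : IsMinOn (fun t => f t + ε * w t) s x)
    (hx : x ∈ s) (hy : y ∈ s) : f x - f y ≤ 2 * ε * sSup ((fun t => |w t|) '' s) := by
  have value_le : f x + ε * w x ≤ f y + ε * w y := isMinOn_iff.mp hmin y hy
  calc
    f x - f y ≤ ε * (w y - w x) := by linarith
    _ ≤ ε * (2 * sSup ((fun t => |w t|) '' s)) := by
      gcongr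
      exact sub_le_two_mul_sSup_image_abs hw hy hx
    _ = 2 * ε * sSup ((fun t => |w t|) '' s) := by ring

end Oscillation

section InnerProductSpace

open scoped RealInnerProductSpace

variable {E : Type*} [NormedAddCommGroup E] [InnerProductSpace ℝ E]

lemma half_norm_sq_sub_inner_sub_self (a x : E) :
    (‖x‖ ^ 2 / 2 - ⟪a, x⟫) - (‖a‖ ^ 2 / 2 - ⟪a, a⟫) = ‖x - a‖ ^ 2 / 2 := by
  rw [norm_sub_sq_real, real_inner_self_eq_norm_sq, real_inner_comm]
  ring

theorem example1_pathwise_consistency_general {Θ : Set E} {θ₀ θhat : E} (hθ₀ : θ₀ ∈ Θ)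
    {w : E → ℝ} (hw : BddAbove ((fun t => |w t|) '' Θ)) {ε : ℝ} (hε : 0 ≤ ε)
    {X : E → ℝ} (hX : ∀ t ∈ Θ, X t = ‖t‖ ^ 2 / 2 - ⟪θ₀, t⟫ + ε * w t)
    (hθhat : θhat ∈ Θ) (hmin : IsMinOn X Θ θhat) :
    ‖θhat - θ₀‖ ^ 2 ≤ 4 * ε * sSup ((fun t => |w t|) '' Θ) := by
  have hmin_signal_add_noise :
      IsMinOn (fun t => (‖t‖ ^ 2 / 2 - ⟪θ₀, t⟫) + ε * w t) Θ θhat :=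
    hmin.congr (Filter.eventuallyEq_principal.mpr hX) (hX θhat hθhat)
  have half_sq_le : ‖θhat - θ₀‖ ^ 2 / 2 ≤ 2 * ε * sSup ((fun t => |w t|) '' Θ) := by
    rw [← half_norm_sq_sub_inner_sub_self]
    exact sub_le_two_mul_mul_sSup_of_isMinOn_add_mul hε hw hmin_signal_add_noise hθhat hθ₀
  linarith

end InnerProductSpace

/-- Pathwise consistency bound for Example 1: for the observed path
X(t) = t²/2 − θ₀t + εw(t), any minimizer θ̂ of X over [α,β] (equivalently,
maximizer of the pathwise pseudo log-likelihood θ ↦ X(T) − 2X(θ)) satisfies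
(θ̂ − θ₀)² ≤ 4ε·sup_{[α,β]}|w|. -/
theorem example1_pathwise_consistency
    (T α β θ₀ : ℝ) (hα : 0 < α) (hαθ : α < θ₀) (hθβ : θ₀ < β) (hβT : β < T)
    (w : ℝ → ℝ) (hw : ContinuousOn w (Set.Icc 0 T))
    (ε : ℝ) (hε : 0 < ε)
    (X : ℝ → ℝ) (hX : ∀ t, X t = t ^ 2 / 2 - θ₀ * t + ε * w t)
    (θhat : ℝ) (hθhat : θhat ∈ Set.Icc α β)
    (hmin : ∀ θ ∈ Set.Icc α β, X θhat ≤ X θ) :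
    (θhat - θ₀) ^ 2 ≤ 4 * ε * sSup ((fun t => |w t|) '' Set.Icc α β) := by
  have hbdd : BddAbove ((fun t => |w t|) '' Set.Icc α β) :=
    isCompact_Icc.bddAbove_image (hw.mono (Set.Icc_subset_Icc hα.le hβT.le)).abs
  simpa using example1_pathwise_consistency_general (Set.mem_Icc.mpr ⟨hαθ.le, hθβ.le⟩)
    hbdd hε.le (fun t _ => by simp [hX, mul_comm]) hθhat (isMinOn_iff.mpr hmin)
end
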